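/- Let A₁, A₂, A₃ be hermitian 4×4 complex matrices whose joint numerical range W = W(A₁,A₂,A₃) has dimension 3. Suppose G₁ and G₂ are distinct one-dimensional nonexposed faces of W, H₁ and H₂ are distinct non-elliptic faces of W with G₁ ⊆ H₁ and G₂ ⊆ H₂, and G is a one-dimensional exposed face of W. If G₁ ∩ G₂ ∩ G is nonempty, then G₁ ∩ G₂ ∩ G is a singleton {p} and p is a corner point of W. -/

import Mathlib

open Matrix ComplexOrder

noncomputable section

/-- A density matrix: positive semidefinite with unit trace. -/
def IsDensity {n : Type*} [Fintype n] (ρ : Matrix n n ℂ) : Prop :=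
  ρ.PosSemidef ∧ ρ.trace = 1

/-- The measurement map `ρ ↦ (tr ρA₁, …, tr ρA_k)` (the traces are real for
hermitian matrices). -/
def wpt {n : Type*} [Fintype n] {k : ℕ} (A : Fin k → Matrix n n ℂ)
    (ρ : Matrix n n ℂ) : Fin k → ℝ :=
  fun i => ((ρ * A i).trace).re

/-- The joint numerical range of `k` matrices. -/
def JNR {n : Type*} [Fintype n] {k : ℕ} (A : Fin k → Matrix n n ℂ) :
    Set (Fin k → ℝ) :=
  wpt A '' {ρ | IsDensity ρ}

/-- `F` is a face of the convex set `C`: a convex subset such that whenever an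
open segment between two points of `C` meets `F`, both endpoints lie in `F`. -/
def IsFaceOf {E : Type*} [AddCommGroup E] [Module ℝ E] (C F : Set E) : Prop :=
  Convex ℝ F ∧ IsExtreme ℝ C F

/-- The dimension of a convex set: the dimension of its affine hull. -/
def convDim {E : Type*} [AddCommGroup E] [Module ℝ E] (F : Set E) : ℕ :=
  Module.finrank ℝ (affineSpan ℝ F).direction

/-- Euclidean dot product on `Fin d → ℝ`. -/
def dotR {d : ℕ} (u v : Fin d → ℝ) : ℝ := ∑ i, u i * v i

/-- `F` is an exposed face of `C`: the set of minimizers of a linear functional. -/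
def IsExposedFace {d : ℕ} (C F : Set (Fin d → ℝ)) : Prop :=
  ∃ u : Fin d → ℝ, F = {x ∈ C | ∀ y ∈ C, dotR u x ≤ dotR u y}

/-- The normal cone of `C` at `p`. -/
def normalConeAt {d : ℕ} (C : Set (Fin d → ℝ)) (p : Fin d → ℝ) :
    Set (Fin d → ℝ) :=
  {u | ∀ y ∈ C, 0 ≤ dotR (y - p) u}

/-- `p` is a corner point of `C` if the normal cone of `C` at `p` spans `ℝ^d`. -/
def IsCornerPoint {d : ℕ} (C : Set (Fin d → ℝ)) (p : Fin d → ℝ) : Prop :=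
  p ∈ C ∧ Submodule.span ℝ (normalConeAt C p) = ⊤

/-- The closed unit disk of `ℝ²`. -/
def unitDisk2 : Set (Fin 2 → ℝ) := {v | v 0 ^ 2 + v 1 ^ 2 ≤ 1}

/-- An elliptic disk in `ℝ³`: the image of the closed unit disk of `ℝ²` under an
injective affine map. -/
def IsEllipticDisk (F : Set (Fin 3 → ℝ)) : Prop :=
  ∃ f : (Fin 2 → ℝ) →ᵃ[ℝ] (Fin 3 → ℝ), Function.Injective f ∧ F = f '' unitDisk2

/-- A non-elliptic face of `W`: a two-dimensional face that is not an elliptic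
disk. -/
def IsNonEllipticFace (W F : Set (Fin 3 → ℝ)) : Prop :=
  IsFaceOf W F ∧ convDim F = 2 ∧ ¬ IsEllipticDisk F

/-- A rank-3 face of the joint numerical range of `A`. -/
def IsRank3Face {k : ℕ} (A : Fin k → Matrix (Fin 4) (Fin 4) ℂ)
    (F : Set (Fin k → ℝ)) : Prop :=
  F.Nonempty ∧ IsFaceOf (JNR A) F ∧
    ∃ P : Matrix (Fin 4) (Fin 4) ℂ, Pᴴ = P ∧ P * P = P ∧ P.rank = 3 ∧
      ∀ ρ : Matrix (Fin 4) (Fin 4) ℂ, IsDensity ρ → (wpt A ρ ∈ F ↔ P * ρ * P = ρ)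

/-!
The range `W` is the convex hull of the expectation tuples of unit vectors, and the face of `W` at
`p` with inner normal `u` is the hull of the tuples of unit vectors in `V = ker ∑ᵢ uᵢ (Aᵢ - pᵢ)`.
Let `u₁`, `u₂`, `w` be inner normals of `H₁`, `H₂`, `G` at the common point `p`. If they are
linearly independent, they span and `p` is a corner point. Otherwise `w` is a positive combination
of `u₁` and `u₂`, so `G = H₁ ∩ H₂`, and each of the planar sets `Hⱼ` has the two distinct edges
`Gⱼ` and `G` at `p`, hence a corner at `p`. Since a semidefinite form vanishing at `x` has `x` in
its radical, a corner of `Hⱼ` at `p` makes `(Aᵢ - pᵢ) x` orthogonal to `Vⱼ` for every unit vector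
`x` with tuple `p`. If `dim Vⱼ ≤ 2`, this would leave only a segment for `Hⱼ`; so `V₁` and `V₂`
are distinct of dimension at least three, `V₁ + V₂ = ℂ⁴`, and every such `x` is a joint
eigenvector. Consequently `W` lies in the cone with apex `p` over the compact set of tuples of
unit vectors orthogonal to the joint eigenspace. The extreme point `p` is not in the hull of that
set, and strict separation provides an open set of inner normals at `p`.
-/

section ConvexDimension

variable {V : Type*} [AddCommGroup V] [Module ℝ V] [FiniteDimensional ℝ V]

theorem convDim_mono {F C : Set V} (h : F ⊆ C) : convDim F ≤ convDim C :=
  Submodule.finrank_mono (AffineSubspace.direction_le (affineSpan_mono ℝ h))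

theorem convDim_le_finrank {S : Set V} {p : V} {D : Submodule ℝ V} (h : ∀ y ∈ S, y - p ∈ D) :
    convDim S ≤ Module.finrank ℝ D := by
  have hS : affineSpan ℝ S ≤ AffineSubspace.mk' p D :=
    affineSpan_le.2 fun y hy => AffineSubspace.mem_mk'.2 (h y hy)
  exact Submodule.finrank_mono
    ((AffineSubspace.direction_le hS).trans_eq (AffineSubspace.direction_mk' p D))

theorem subsingleton_of_convDim_eq_zero {F : Set V} (h : convDim F = 0) : F.Subsingleton := by
  rwa [convDim, direction_affineSpan, Submodule.finrank_eq_zero,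
    vectorSpan_eq_bot_iff_subsingleton] at h

theorem exists_dual_inf_ker_eq {D' D : Submodule ℝ V} (hle : D' ≤ D)
    (hd : Module.finrank ℝ D' + 1 = Module.finrank ℝ D) :
    ∃ g : Module.Dual ℝ V, D ⊓ LinearMap.ker g = D' := by
  obtain ⟨v, hvD, hvD'⟩ := SetLike.exists_of_lt (hle.lt_of_ne fun h => by rw [h] at hd; omega)
  obtain ⟨g, hgv, hg⟩ := Submodule.exists_le_ker_of_notMem hvD'
  have hlt : D ⊓ LinearMap.ker g < D := inf_le_left.lt_of_ne fun h => hgv (inf_eq_left.1 h hvD)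
  refine ⟨g, (Submodule.eq_of_le_of_finrank_le (le_inf hle hg) ?_).symm⟩
  have := Submodule.finrank_lt_finrank_of_lt hlt
  omega

end ConvexDimension

section Convexity

variable {V : Type*} [AddCommGroup V] [Module ℝ V] {C D F G : Set V}

theorem convDim_convexHull (S : Set V) : convDim (convexHull ℝ S) = convDim S := by
  rw [convDim, affineSpan_convexHull, convDim]

theorem nonneg_or_nonpos_of_isExtreme_zeros (hC : Convex ℝ C) {φ : V →ᵃ[ℝ] ℝ}
    (h : IsExtreme ℝ C {y ∈ C | φ y = 0}) :
    (∀ y ∈ C, 0 ≤ φ y) ∨ ∀ y ∈ C, φ y ≤ 0 := by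
  by_contra! ⟨⟨y, hy, hy0⟩, z, hz, hz0⟩
  obtain ⟨m, hm, hm0⟩ : (0 : ℝ) ∈ φ '' openSegment ℝ y z := by
    rw [image_openSegment, openSegment_eq_Ioo (hy0.trans hz0)]
    exact ⟨hy0, hz0⟩
  have hmC : m ∈ C := hC.openSegment_subset hy hz hm
  exact hy0.ne (h.left_mem_of_mem_openSegment hy hz ⟨hmC, hm0⟩ hm).2

theorem IsFaceOf.inter (hF : IsFaceOf C F) (hG : IsFaceOf C G) : IsFaceOf C (F ∩ G) :=
  ⟨hF.1.inter hG.1, hF.2.inter hG.2⟩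

theorem IsFaceOf.mono (hF : IsFaceOf C F) (hDC : D ⊆ C) (hFD : F ⊆ D) : IsFaceOf D F :=
  ⟨hF.1, hF.2.mono hDC hFD⟩

end Convexity

section FiniteDimensional

variable {V : Type*} [NormedAddCommGroup V] [NormedSpace ℝ V] [FiniteDimensional ℝ V]
  {C F G : Set V}

theorem IsFaceOf.mem_of_mem_affineSpan (hF : IsFaceOf C F) {m : V} (hm : m ∈ C)
    (hmF : m ∈ affineSpan ℝ F) : m ∈ F := by
  have hne : F.Nonempty := (affineSpan_nonempty ℝ).1 ⟨m, hmF⟩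
  obtain ⟨-, ⟨⟨q, hq⟩, hqi, rfl⟩⟩ := hne.intrinsicInterior hF.1
  let ray : ℝ → affineSpan ℝ F := fun t =>
    ⟨AffineMap.lineMap m q t, AffineMap.lineMap_mem t hmF hq⟩
  have hray : ContinuousAt ray 1 :=
    (AffineMap.lineMap_continuous.subtype_mk fun t => AffineMap.lineMap_mem t hmF hq).continuousAt
  have hnear : ∀ᶠ t in nhds (1 : ℝ), (ray t : V) ∈ F := by
    refine hray.eventually (p := fun z : affineSpan ℝ F => (z : V) ∈ F) ?_
    have hray1 : ray 1 = ⟨q, hq⟩ := Subtype.ext (AffineMap.lineMap_apply_one m q)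
    rw [hray1]
    exact mem_interior_iff_mem_nhds.1 hqi
  obtain ⟨t, htF, ht⟩ : ∃ t, (ray t : V) ∈ F ∧ 1 < t :=
    ((hnear.filter_mono nhdsWithin_le_nhds).and self_mem_nhdsWithin :
      ∀ᶠ t in nhdsWithin (1 : ℝ) (Set.Ioi 1), _).exists
  have hqF : q ∈ F := intrinsicInterior_subset ⟨⟨q, hq⟩, hqi, rfl⟩
  refine hF.2.left_mem_of_mem_openSegment hm (hF.2.subset htF) hqF ?_
  have hq_eq : q = AffineMap.lineMap m (AffineMap.lineMap m q t) t⁻¹ := by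
    rw [AffineMap.lineMap_lineMap_right, inv_mul_cancel₀ (by positivity),
      AffineMap.lineMap_apply_one]
  rw [openSegment_eq_image_lineMap]
  exact ⟨t⁻¹, ⟨by positivity, inv_lt_one_of_one_lt₀ ht⟩, hq_eq.symm⟩

theorem IsFaceOf.eq_of_subset_of_convDim_le (hF : IsFaceOf C F) (hne : F.Nonempty) (hFG : F ⊆ G)
    (hGC : G ⊆ C) (hd : convDim G ≤ convDim F) : F = G := by
  have hdir : (affineSpan ℝ F).direction = (affineSpan ℝ G).direction :=
    Submodule.eq_of_le_of_finrank_le (AffineSubspace.direction_le (affineSpan_mono ℝ hFG)) hd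
  have hspan : affineSpan ℝ F = affineSpan ℝ G :=
    AffineSubspace.eq_of_direction_eq_of_nonempty_of_le hdir ((affineSpan_nonempty ℝ).2 hne)
      (affineSpan_mono ℝ hFG)
  exact hFG.antisymm fun y hy =>
    hF.mem_of_mem_affineSpan (hGC hy) (hspan ▸ subset_affineSpan ℝ G hy)

theorem IsFaceOf.inter_eq_singleton_of_convDim_eq_one (hF : IsFaceOf C F) (hG : IsFaceOf C G)
    (hdF : convDim F = 1) (hdG : convDim G = 1) (hne : F ≠ G) {p : V} (hpF : p ∈ F) (hpG : p ∈ G) :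
    F ∩ G = {p} := by
  refine Set.Subsingleton.eq_singleton_of_mem ?_ ⟨hpF, hpG⟩
  refine subsingleton_of_convDim_eq_zero (by_contra fun h0 => hne ?_)
  have hFG := hF.inter hG
  have hpFG : (F ∩ G).Nonempty := ⟨p, hpF, hpG⟩
  calc
    F = F ∩ G :=
      (hFG.eq_of_subset_of_convDim_le hpFG Set.inter_subset_left hF.2.subset (by omega)).symm
    _ = G := hFG.eq_of_subset_of_convDim_le hpFG Set.inter_subset_right hG.2.subset (by omega)

theorem IsFaceOf.exists_dual_of_convDim_add_one_eq (hF : IsFaceOf C F) (hC : Convex ℝ C)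
    (hd : convDim F + 1 = convDim C) {p : V} (hp : p ∈ F) :
    ∃ g : Module.Dual ℝ V, (∀ y ∈ C, 0 ≤ g (y - p)) ∧ F = {y ∈ C | g (y - p) = 0} := by
  have hpF : p ∈ affineSpan ℝ F := subset_affineSpan ℝ F hp
  have hpC : p ∈ affineSpan ℝ C := subset_affineSpan ℝ C (hF.2.subset hp)
  obtain ⟨g, hg⟩ := exists_dual_inf_ker_eq
    (AffineSubspace.direction_le (affineSpan_mono ℝ hF.2.subset)) hd
  have hF_eq : F = {y ∈ C | g (y - p) = 0} := by
    ext y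
    constructor
    · intro hy
      have hyp := AffineSubspace.vsub_mem_direction (subset_affineSpan ℝ F hy) hpF
      rw [← hg] at hyp
      exact ⟨hF.2.subset hy, hyp.2⟩
    · rintro ⟨hy, hgy⟩
      have hyp : y - p ∈ (affineSpan ℝ F).direction :=
        hg ▸ ⟨AffineSubspace.vsub_mem_direction (subset_affineSpan ℝ C hy) hpC, hgy⟩
      refine hF.mem_of_mem_affineSpan hy ?_
      simpa using AffineSubspace.vadd_mem_of_mem_direction hyp hpF
  let φ : V →ᵃ[ℝ] ℝ := g.toAffineMap.comp (AffineMap.id ℝ V - AffineMap.const ℝ V p)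
  rcases nonneg_or_nonpos_of_isExtreme_zeros hC (φ := φ) (hF_eq ▸ hF.2) with hpos | hneg
  · exact ⟨g, hpos, hF_eq⟩
  · refine ⟨-g, fun y hy => neg_nonneg.2 (hneg y hy), ?_⟩
    simpa only [LinearMap.neg_apply, neg_eq_zero] using hF_eq

theorem isCompact_convexHull {K : Set V} (hK : IsCompact K) : IsCompact (convexHull ℝ K) := by
  let combo (n : ℕ) (q : (Fin n → ℝ) × (Fin n → V)) : V := ∑ i, q.1 i • q.2 i
  have hcombo (n : ℕ) : Continuous (combo n) := by fun_prop
  have hcompact (n : ℕ) :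
      IsCompact (combo n '' (stdSimplex ℝ (Fin n) ×ˢ Set.univ.pi fun _ => K)) :=
    ((isCompact_stdSimplex ℝ (Fin n)).prod (isCompact_univ_pi fun _ => hK)).image (hcombo n)
  convert (Set.finite_Iic (Module.finrank ℝ V + 1)).isCompact_biUnion fun n _ => hcompact n
  refine Set.Subset.antisymm (fun x hx => ?_) (Set.iUnion₂_subset ?_)
  · obtain ⟨ι, _, z, w, hz, hind, hw, hw1, rfl⟩ := eq_pos_convex_span_of_mem_convexHull hx
    let e := Fintype.equivFin ι
    have hcard : Fintype.card ι ≤ Module.finrank ℝ V + 1 :=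
      hind.card_le_finrank_succ.trans (by gcongr; exact Submodule.finrank_le _)
    refine Set.mem_biUnion hcard ⟨(w ∘ e.symm, z ∘ e.symm), ⟨⟨?_, ?_⟩, ?_⟩, ?_⟩
    · exact fun i => (hw _).le
    · exact (e.symm.sum_comp w).trans hw1
    · exact fun i _ => hz ⟨_, rfl⟩
    · exact e.symm.sum_comp fun i => w i • z i
  · rintro n - _ ⟨q, ⟨hq, hqK⟩, rfl⟩
    exact (convex_convexHull ℝ K).sum_mem (fun i _ => hq.1 i) hq.2
      fun i _ => subset_convexHull ℝ K (hqK i (Set.mem_univ i))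

end FiniteDimensional

section NormalCone

variable {d : ℕ} {C S : Set (Fin d → ℝ)} {p u v w : Fin d → ℝ}

/-- The points of `C` on the hyperplane through `p` with normal vector `u`. When `p ∈ C` and `u`
belongs to the normal cone of `C` at `p`, this is the exposed face of `C` with inner normal `u`. -/
def supportFace (C : Set (Fin d → ℝ)) (p u : Fin d → ℝ) : Set (Fin d → ℝ) :=
  {y ∈ C | (y - p) ⬝ᵥ u = 0}

theorem mem_normalConeAt : u ∈ normalConeAt C p ↔ ∀ y ∈ C, 0 ≤ (y - p) ⬝ᵥ u :=
  Iff.rfl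

theorem mem_supportFace_self (hp : p ∈ C) : p ∈ supportFace C p u :=
  ⟨hp, by rw [sub_self, zero_dotProduct]⟩

theorem normalConeAt_anti (h : S ⊆ C) : normalConeAt C p ⊆ normalConeAt S p :=
  fun _ hu y hy => hu y (h hy)

theorem combo_sub_dotProduct {a b : ℝ} (hab : a + b = 1) (x y : Fin d → ℝ) :
    (a • x + b • y - p) ⬝ᵥ u = a * ((x - p) ⬝ᵥ u) + b * ((y - p) ⬝ᵥ u) := by
  have h : a • x + b • y - p = a • (x - p) + b • (y - p) := by
    rw [smul_sub, smul_sub, sub_add_sub_comm, ← add_smul, hab, one_smul]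
  rw [h, add_dotProduct, smul_dotProduct, smul_dotProduct, smul_eq_mul, smul_eq_mul]

theorem normalConeAt_convexHull : normalConeAt (convexHull ℝ S) p = normalConeAt S p := by
  refine (normalConeAt_anti (subset_convexHull ℝ S)).antisymm fun u hu => ?_
  refine convexHull_min (t := {y | 0 ≤ (y - p) ⬝ᵥ u}) hu fun x hx y hy a b ha hb hab => ?_
  rw [Set.mem_ofPred_eq, combo_sub_dotProduct hab]
  exact add_nonneg (mul_nonneg ha hx) (mul_nonneg hb hy)

theorem combo_sub_dotProduct_eq_zero_iff {a b : ℝ} (ha : 0 < a) (hb : 0 < b) (hab : a + b = 1)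
    {x y : Fin d → ℝ} (hx : 0 ≤ (x - p) ⬝ᵥ u) (hy : 0 ≤ (y - p) ⬝ᵥ u) :
    (a • x + b • y - p) ⬝ᵥ u = 0 ↔ (x - p) ⬝ᵥ u = 0 ∧ (y - p) ⬝ᵥ u = 0 := by
  rw [combo_sub_dotProduct hab, add_eq_zero_iff_of_nonneg (mul_nonneg ha.le hx)
    (mul_nonneg hb.le hy), mul_eq_zero_iff_left ha.ne', mul_eq_zero_iff_left hb.ne']

theorem isFaceOf_supportFace (hC : Convex ℝ C) (hu : u ∈ normalConeAt C p) :
    IsFaceOf C (supportFace C p u) := by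
  refine ⟨fun x hx y hy a b ha hb hab => ⟨hC hx.1 hy.1 ha hb hab, ?_⟩, fun _ h => h.1, ?_⟩
  · rw [combo_sub_dotProduct hab, hx.2, hy.2, mul_zero, mul_zero, add_zero]
  · rintro x hx y hy _ ⟨-, hz⟩ ⟨a, b, ha, hb, hab, rfl⟩
    exact ⟨hx, ((combo_sub_dotProduct_eq_zero_iff ha hb hab (hu x hx) (hu y hy)).1 hz).1⟩

theorem supportFace_convexHull (hu : u ∈ normalConeAt S p) :
    supportFace (convexHull ℝ S) p u = convexHull ℝ (supportFace S p u) := by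
  refine Set.Subset.antisymm (fun y hy => ?_) (convexHull_min ?_ ?_)
  · suffices h : convexHull ℝ S ⊆
        {y | 0 ≤ (y - p) ⬝ᵥ u ∧ ((y - p) ⬝ᵥ u = 0 → y ∈ convexHull ℝ (supportFace S p u))} from
      (h hy.1).2 hy.2
    refine convexHull_min (fun x hx => ⟨hu x hx, fun h => subset_convexHull ℝ _ ⟨hx, h⟩⟩)
      (convex_iff_forall_pos.2 fun x hx y hy a b ha hb hab => ⟨?_, fun h => ?_⟩)
    · rw [combo_sub_dotProduct hab]
      exact add_nonneg (mul_nonneg ha.le hx.1) (mul_nonneg hb.le hy.1)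
    · obtain ⟨hx0, hy0⟩ := (combo_sub_dotProduct_eq_zero_iff ha hb hab hx.1 hy.1).1 h
      exact convex_convexHull ℝ _ (hx.2 hx0) (hy.2 hy0) ha.le hb.le hab
  · exact fun y hy => ⟨subset_convexHull ℝ S hy.1, hy.2⟩
  · rw [← normalConeAt_convexHull] at hu
    exact (isFaceOf_supportFace (convex_convexHull ℝ S) hu).1

theorem IsFaceOf.exists_supportFace {F : Set (Fin d → ℝ)} (hF : IsFaceOf C F) (hC : Convex ℝ C)
    (hd : convDim F + 1 = convDim C) (hp : p ∈ F) :
    ∃ u ∈ normalConeAt C p, F = supportFace C p u := by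
  obtain ⟨g, hg, hFg⟩ := hF.exists_dual_of_convDim_add_one_eq hC hd hp
  obtain ⟨u, rfl⟩ := (dotProductEquiv ℝ (Fin d)).surjective g
  simp only [dotProductEquiv_apply_apply, dotProduct_comm u] at hg hFg
  exact ⟨u, hg, hFg⟩

theorem IsExposedFace.exists_supportFace {F : Set (Fin d → ℝ)} (hF : IsExposedFace C F)
    (hp : p ∈ F) : ∃ u ∈ normalConeAt C p, F = supportFace C p u := by
  obtain ⟨u, rfl⟩ := hF
  have hdot (y : Fin d → ℝ) : (y - p) ⬝ᵥ u = dotR u y - dotR u p := by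
    rw [dotProduct_comm, dotProduct_sub]; rfl
  refine ⟨u, fun y hy => ?_, ?_⟩
  · exact (sub_nonneg.2 (hp.2 y hy)).trans_eq (hdot y).symm
  · ext y
    simp only [supportFace, Set.mem_ofPred_eq, hdot, sub_eq_zero]
    refine and_congr_right fun hy => ⟨fun h => (h p hp.1).antisymm (hp.2 y hy), fun h => ?_⟩
    exact h ▸ hp.2

theorem supportFace_zero : supportFace C p 0 = C := by
  simp only [supportFace, dotProduct_zero, and_true, Set.ofPred_mem_eq]

theorem supportFace_smul {a : ℝ} (ha : a ≠ 0) : supportFace C p (a • u) = supportFace C p u := by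
  simp only [supportFace, dotProduct_smul, smul_eq_zero_iff_right ha]

theorem supportFace_smul_add_of_supportFace_eq_self (hu : supportFace C p u = C) (a : ℝ) :
    supportFace C p (a • u + v) = supportFace C p v := by
  refine Set.ext fun y => and_congr_right fun hy => ?_
  have hyu : (y - p) ⬝ᵥ u = 0 := (hu.symm ▸ hy : y ∈ supportFace C p u).2
  rw [dotProduct_add, dotProduct_smul, hyu, smul_zero, zero_add]

theorem supportFace_smul_add_smul (hu : u ∈ normalConeAt C p) (hv : v ∈ normalConeAt C p)
    {a b : ℝ} (ha : 0 < a) (hb : 0 < b) :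
    supportFace C p (a • u + b • v) = supportFace C p u ∩ supportFace C p v := by
  ext y
  refine (and_congr_right fun hy => ?_).trans and_and_left
  rw [dotProduct_add, dotProduct_smul, dotProduct_smul, smul_eq_mul, smul_eq_mul,
    add_eq_zero_iff_of_nonneg (mul_nonneg ha.le (mem_normalConeAt.1 hu y hy))
      (mul_nonneg hb.le (mem_normalConeAt.1 hv y hy)),
    mul_eq_zero_iff_left ha.ne', mul_eq_zero_iff_left hb.ne']

theorem supportFace_subset_of_nonpos (hu : u ∈ normalConeAt C p) {a b : ℝ}
    (hw : a • u + b • v ∈ normalConeAt C p) (ha : a ≤ 0) :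
    supportFace C p v ⊆ supportFace C p (a • u + b • v) := by
  rintro y ⟨hy, hyv⟩
  have hyw := hw y hy
  refine ⟨hy, le_antisymm ?_ hyw⟩
  rw [dotProduct_add, dotProduct_smul, dotProduct_smul, hyv, smul_zero, add_zero]
  exact mul_nonpos_of_nonpos_of_nonneg ha (hu y hy)

theorem supportFace_eq_inter_of_mem_span (hu : u ∈ normalConeAt C p) (hv : v ∈ normalConeAt C p)
    (hw : w ∈ normalConeAt C p) (hspan : w ∈ Submodule.span ℝ {u, v})
    (huw : ¬ supportFace C p u ⊆ supportFace C p w)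
    (hvw : ¬ supportFace C p v ⊆ supportFace C p w) :
    supportFace C p w = supportFace C p u ∩ supportFace C p v := by
  obtain ⟨a, b, rfl⟩ := Submodule.mem_span_pair.1 hspan
  have ha : 0 < a := not_le.1 fun h => hvw (supportFace_subset_of_nonpos hu hw h)
  have hb : 0 < b := not_le.1 fun h => huw <| by
    rw [add_comm] at hw ⊢
    exact supportFace_subset_of_nonpos hv hw h
  exact supportFace_smul_add_smul hu hv ha hb

theorem linearIndependent_pair_of_supportFace_ne (hu : supportFace C p u ≠ C)
    (hv : supportFace C p v ≠ C) (huv : supportFace C p u ≠ supportFace C p v) :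
    LinearIndependent ℝ ![u, v] := by
  have hne {x : Fin d → ℝ} (hx : supportFace C p x ≠ C) : x ≠ 0 := by
    rintro rfl
    exact hx supportFace_zero
  rw [LinearIndependent.pair_iff' (hne hu)]
  rintro a rfl
  rcases eq_or_ne a 0 with rfl | ha
  · exact hne hv (zero_smul ℝ u)
  · exact huv (supportFace_smul ha).symm

theorem span_eq_top_or_mem_span_pair {N : Set (Fin 3 → ℝ)} {u v w : Fin 3 → ℝ} (hu : u ∈ N)
    (hv : v ∈ N) (hw : w ∈ N) (huv : LinearIndependent ℝ ![u, v]) :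
    Submodule.span ℝ N = ⊤ ∨ w ∈ Submodule.span ℝ {u, v} := by
  refine or_iff_not_imp_right.2 fun hwuv => ?_
  have hlt : Submodule.span ℝ {u, v} < Submodule.span ℝ N :=
    SetLike.lt_iff_le_and_exists.2
      ⟨Submodule.span_mono (Set.pair_subset hu hv), w, Submodule.subset_span hw, hwuv⟩
  have htwo : Module.finrank ℝ (Submodule.span ℝ {u, v}) = 2 := by
    rw [← Matrix.range_cons_cons_empty, finrank_span_eq_card huv, Fintype.card_fin]
  have := Submodule.finrank_lt_finrank_of_lt hlt
  refine Submodule.eq_top_of_finrank_eq (le_antisymm (Submodule.finrank_le _) ?_)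
  rw [Module.finrank_fin_fun]
  omega

theorem span_normalConeAt_eq_top_of_planar {H F G : Set (Fin 3 → ℝ)} {p u : Fin 3 → ℝ}
    (hH : Convex ℝ H) (hdH : convDim H = 2) (hu : u ≠ 0) (hHu : supportFace H p u = H)
    (hF : IsFaceOf H F) (hdF : convDim F = 1) (hG : IsFaceOf H G) (hdG : convDim G = 1)
    (hFG : F ≠ G) (hpF : p ∈ F) (hpG : p ∈ G) :
    Submodule.span ℝ (normalConeAt H p) = ⊤ := by
  obtain ⟨f, hf, rfl⟩ := hF.exists_supportFace hH (by omega) hpF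
  obtain ⟨g, hg, rfl⟩ := hG.exists_supportFace hH (by omega) hpG
  have hne {x : Fin 3 → ℝ} (hx : convDim (supportFace H p x) = 1) : supportFace H p x ≠ H :=
    fun h => by rw [h] at hx; omega
  have huN : u ∈ normalConeAt H p := fun y hy => (hHu.symm ▸ hy : y ∈ supportFace H p u).2.ge
  have hindep : LinearIndependent ℝ ![u, f] := by
    rw [LinearIndependent.pair_iff' hu]
    rintro a rfl
    refine hne hdF ?_
    rw [← add_zero (a • u), supportFace_smul_add_of_supportFace_eq_self hHu, supportFace_zero]
  refine (span_eq_top_or_mem_span_pair huN hf hg hindep).resolve_right fun hmem => ?_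
  obtain ⟨a, b, rfl⟩ := Submodule.mem_span_pair.1 hmem
  rw [supportFace_smul_add_of_supportFace_eq_self hHu] at hFG hdG
  rcases eq_or_ne b 0 with rfl | hb
  · exact hne hdG (by rw [zero_smul, supportFace_zero])
  · exact hFG (supportFace_smul hb).symm

theorem span_normalConeAt_supportFace_eq_top {C F G : Set (Fin 3 → ℝ)} {p u : Fin 3 → ℝ}
    (hC : Convex ℝ C) (hu : u ∈ normalConeAt C p) (hne : supportFace C p u ≠ C)
    (hdu : convDim (supportFace C p u) = 2)
    (hF : IsFaceOf C F) (hdF : convDim F = 1) (hFu : F ⊆ supportFace C p u)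
    (hG : IsFaceOf C G) (hdG : convDim G = 1) (hGu : G ⊆ supportFace C p u)
    (hFG : F ≠ G) (hpF : p ∈ F) (hpG : p ∈ G) :
    Submodule.span ℝ (normalConeAt (supportFace C p u) p) = ⊤ := by
  have hsub : supportFace C p u ⊆ C := Set.sep_subset _ _
  have hu0 : u ≠ 0 := by
    rintro rfl
    exact hne supportFace_zero
  have hplane : supportFace (supportFace C p u) p u = supportFace C p u :=
    Set.sep_eq_self_iff_mem_true.2 fun _ hy => hy.2
  exact span_normalConeAt_eq_top_of_planar (isFaceOf_supportFace hC hu).1 hdu hu0 hplane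
    (hF.mono hsub hFu) hdF (hG.mono hsub hGu) hdG hFG hpF hpG

theorem span_normalConeAt_eq_top_or_supportFace_eq_inter {C : Set (Fin 3 → ℝ)}
    {p u v w : Fin 3 → ℝ} (hu : u ∈ normalConeAt C p) (hv : v ∈ normalConeAt C p)
    (hw : w ∈ normalConeAt C p) (hdC : convDim C = 3)
    (hdu : convDim (supportFace C p u) = 2) (hdv : convDim (supportFace C p v) = 2)
    (hdw : convDim (supportFace C p w) = 1) (huv : supportFace C p u ≠ supportFace C p v) :
    Submodule.span ℝ (normalConeAt C p) = ⊤ ∨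
      supportFace C p w = supportFace C p u ∩ supportFace C p v := by
  have hne {x : Fin 3 → ℝ} (hx : convDim (supportFace C p x) = 2) : supportFace C p x ≠ C :=
    fun h => by rw [h] at hx; omega
  have hnot {x : Fin 3 → ℝ} (hx : convDim (supportFace C p x) = 2) :
      ¬ supportFace C p x ⊆ supportFace C p w := fun h => by
    have := convDim_mono h
    omega
  have huv_indep := linearIndependent_pair_of_supportFace_ne (hne hdu) (hne hdv) huv
  exact (span_eq_top_or_mem_span_pair hu hv hw huv_indep).imp_right fun hmem =>
    supportFace_eq_inter_of_mem_span hu hv hw hmem (hnot hdu) (hnot hdv)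

theorem span_normalConeAt_eq_top_of_notMem_convexHull (hK : IsCompact S)
    (hp : p ∉ convexHull ℝ S) : Submodule.span ℝ (normalConeAt S p) = ⊤ := by
  obtain ⟨f, a, hfp, hf⟩ := geometric_hahn_banach_point_closed (convex_convexHull ℝ S)
    (isCompact_convexHull hK).isClosed hp
  obtain ⟨u, hu⟩ := (dotProductEquiv ℝ (Fin d)).surjective f.toLinearMap
  have hfu (y : Fin d → ℝ) : y ⬝ᵥ u = f y :=
    (dotProduct_comm y u).trans (LinearMap.congr_fun hu y)
  have hpos : ∀ y ∈ S, 0 < (y - p) ⬝ᵥ u := fun y hy => by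
    rw [hfu, map_sub, sub_pos]
    exact hfp.trans (hf y (subset_convexHull ℝ S hy))
  have hcont : Continuous fun z : (Fin d → ℝ) × (Fin d → ℝ) => (z.2 - p) ⬝ᵥ z.1 := by fun_prop
  have hnear : ∀ᶠ v in nhds u, ∀ y ∈ S, 0 < (y - p) ⬝ᵥ v :=
    hK.eventually_forall_of_forall_eventually fun y hy =>
      hcont.continuousAt.eventually_const_lt (hpos y hy)
  refine Submodule.eq_top_of_nonempty_interior' _ ⟨u, ?_⟩
  exact mem_interior_iff_mem_nhds.2 (hnear.mono fun v hv =>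
    Submodule.subset_span fun y hy => (hv y hy).le)

end NormalCone

section LinearAlgebra

variable {K V : Type*} [DivisionRing K] [AddCommGroup V] [Module K V] [FiniteDimensional K V]

theorem exists_le_span_pair_of_finrank_le_two {U : Submodule K V} (hU : Module.finrank K U ≤ 2)
    {x : V} (hx : x ∈ U) (hx0 : x ≠ 0) : ∃ w ∈ U, U ≤ Submodule.span K {x, w} := by
  by_cases hUx : U ≤ Submodule.span K {x}
  · exact ⟨x, hx, hUx.trans (Submodule.span_mono (by simp))⟩
  obtain ⟨w, hwU, hwx⟩ := SetLike.not_le_iff_exists.1 hUx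
  have hlt : Submodule.span K {x} < Submodule.span K {x, w} :=
    SetLike.lt_iff_le_and_exists.2 ⟨Submodule.span_mono (by simp), w,
      Submodule.subset_span (by simp), hwx⟩
  have hrank := Submodule.finrank_lt_finrank_of_lt hlt
  rw [finrank_span_singleton hx0] at hrank
  have hle : Submodule.span K {x, w} ≤ U := Submodule.span_le.2 (Set.pair_subset hx hwU)
  exact ⟨w, hwU, (Submodule.eq_of_le_of_finrank_le hle (hU.trans hrank)).ge⟩

theorem sup_eq_top_of_finrank_le_add_one {U W : Submodule K V} (hne : U ≠ W)
    (hU : Module.finrank K V ≤ Module.finrank K U + 1)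
    (hW : Module.finrank K V ≤ Module.finrank K W + 1) : U ⊔ W = ⊤ := by
  by_contra htop
  have hlt := Submodule.finrank_lt htop
  have hU' : U = U ⊔ W := Submodule.eq_of_le_of_finrank_le le_sup_left (by omega)
  have hW' : W = U ⊔ W := Submodule.eq_of_le_of_finrank_le le_sup_right (by omega)
  exact hne (hU'.trans hW'.symm)

end LinearAlgebra

section VectorStates

variable {E : Type*} [NormedAddCommGroup E] [InnerProductSpace ℂ E] {d : ℕ}
  {T : Fin d → E →ₗ[ℂ] E} {V : Submodule ℂ E} {p u u₁ u₂ : Fin d → ℝ}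

/-- The tuple of quadratic forms `⟨v, Tᵢ v⟩`. For hermitian operators and a unit vector `v` these
are the expectation values of the pure state of `v`. -/
def vectorState (T : Fin d → E →ₗ[ℂ] E) (v : E) : Fin d → ℝ :=
  fun i => (inner ℂ v (T i v)).re

/-- The set of all `vectorState`s of unit vectors in `V`; its convex hull is the joint numerical
range of the compressions of the operators `Tᵢ` to `V`. -/
def vectorRange (T : Fin d → E →ₗ[ℂ] E) (V : Submodule ℂ E) : Set (Fin d → ℝ) :=
  vectorState T '' {v | v ∈ V ∧ ‖v‖ = 1}

/-- The joint numerical range of the compressions of the operators `Tᵢ` to `V`. It is defined by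
unit vectors rather than by density matrices; `JNR_eq_jointRange` relates the two. -/
abbrev jointRange (T : Fin d → E →ₗ[ℂ] E) (V : Submodule ℂ E) : Set (Fin d → ℝ) :=
  convexHull ℝ (vectorRange T V)

/-- The operators `Tᵢ - pᵢ`, which move the point `p` of the joint numerical range to the origin. -/
def centered (T : Fin d → E →ₗ[ℂ] E) (p : Fin d → ℝ) : Fin d → E →ₗ[ℂ] E :=
  fun i => T i - (p i : ℂ) • LinearMap.id

/-- The real pencil `u ↦ ∑ᵢ uᵢ Tᵢ` of operators, whose quadratic forms are the linear functionals
on the joint numerical range. -/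
def pencil (T : Fin d → E →ₗ[ℂ] E) : (Fin d → ℝ) →ₗ[ℝ] E →ₗ[ℂ] E :=
  Fintype.linearCombination ℝ T

theorem vectorRange_mono {U : Submodule ℂ E} (h : U ≤ V) : vectorRange T U ⊆ vectorRange T V :=
  Set.image_mono fun _ hv => ⟨h hv.1, hv.2⟩

theorem isSymmetric_centered (hT : ∀ i, (T i).IsSymmetric) (i : Fin d) :
    (centered T p i).IsSymmetric :=
  (hT i).sub (LinearMap.IsSymmetric.id.smul (Complex.conj_ofReal (p i)))

theorem inner_pencil (x v : E) :
    inner ℂ v (pencil T u x) = Fintype.linearCombination ℝ (fun i => inner ℂ v (T i x)) u := by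
  simp only [pencil, Fintype.linearCombination_apply, LinearMap.sum_apply, LinearMap.smul_apply,
    inner_sum, inner_smul_right_eq_smul]

theorem isSymmetric_pencil (hT : ∀ i, (T i).IsSymmetric) (u : Fin d → ℝ) :
    (pencil T u).IsSymmetric := by
  intro x y
  rw [← inner_conj_symm, inner_pencil, inner_pencil, Fintype.linearCombination_apply,
    Fintype.linearCombination_apply, map_sum]
  refine Finset.sum_congr rfl fun i _ => ?_
  rw [Complex.real_smul, map_mul, Complex.conj_ofReal, inner_conj_symm, hT i, Complex.real_smul]

theorem vectorState_dotProduct (v : E) :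
    vectorState T v ⬝ᵥ u = (inner ℂ v (pencil T u v)).re := by
  simp only [inner_pencil, Fintype.linearCombination_apply, Complex.re_sum, Complex.smul_re,
    dotProduct, vectorState, smul_eq_mul, mul_comm]

theorem vectorState_centered {v : E} (hv : ‖v‖ = 1) :
    vectorState (centered T p) v = vectorState T v - p := by
  ext i
  simp [vectorState, centered, inner_self_eq_norm_sq_to_K, hv]

theorem vectorState_smul (c : ℂ) (v : E) :
    vectorState T (c • v) = ‖c‖ ^ 2 • vectorState T v := by
  ext i
  rw [vectorState, map_smul, inner_smul_left, inner_smul_right, ← mul_assoc,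
    Complex.conj_mul', ← Complex.ofReal_pow, Complex.re_ofReal_mul]
  rfl

theorem vectorState_add_of_inner_eq_zero (hT : ∀ i, (T i).IsSymmetric) {x w : E}
    (hx : ∀ i, inner ℂ x (T i x) = 0) (hw : ∀ i, inner ℂ w (T i x) = 0) :
    vectorState T (x + w) = vectorState T w := by
  ext i
  have hxw : inner ℂ x (T i w) = 0 := by rw [← hT i, ← inner_conj_symm, hw, map_zero]
  simp only [vectorState, map_add, inner_add_left, inner_add_right, hx, hw, hxw, zero_add]

theorem re_inner_pencil_nonneg (hu : u ∈ normalConeAt (vectorRange T V) p) {v : E} (hv : v ∈ V) :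
    0 ≤ (inner ℂ v (pencil (centered T p) u v)).re := by
  rcases eq_or_ne v 0 with rfl | hv0
  · simp
  have hunit : ‖(‖v‖⁻¹ : ℂ) • v‖ = 1 := by simp [norm_smul, hv0]
  have hmem := mem_normalConeAt.1 hu _ ⟨_, ⟨V.smul_mem (‖v‖⁻¹ : ℂ) hv, hunit⟩, rfl⟩
  rw [← vectorState_centered hunit, vectorState_smul, smul_dotProduct,
    vectorState_dotProduct] at hmem
  exact (mul_nonneg_iff_of_pos_left (by simp [hv0])).1 hmem

theorem inner_eq_zero_of_re_inner_nonneg {B : E →ₗ[ℂ] E} (hB : B.IsSymmetric)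
    (hpos : ∀ v ∈ V, 0 ≤ (inner ℂ v (B v)).re) {x v : E} (hx : x ∈ V)
    (hx0 : (inner ℂ x (B x)).re = 0) (hv : v ∈ V) : inner ℂ v (B x) = 0 := by
  let form : PreInnerProductSpace.Core ℂ V :=
    { inner := fun y z => inner ℂ (y : E) (B z)
      conj_inner_symm := fun y z => by rw [inner_conj_symm, hB]
      re_inner_nonneg := fun y => hpos y y.2
      add_left := fun _ _ _ => inner_add_left _ _ _
      smul_left := fun _ _ _ => inner_smul_left _ _ _ }
  have hcs : ‖inner ℂ v (B x)‖ * ‖inner ℂ x (B v)‖ ≤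
      (inner ℂ v (B v)).re * (inner ℂ x (B x)).re :=
    InnerProductSpace.Core.inner_mul_inner_self_le (c := form) ⟨v, hv⟩ ⟨x, hx⟩
  rw [← hB x v, norm_inner_symm (B x) v, hx0, mul_zero] at hcs
  exact norm_eq_zero.1 (mul_self_eq_zero.1 (hcs.antisymm (mul_self_nonneg _)))

theorem vectorState_sub_dotProduct_eq_zero_iff (hT : ∀ i, (T i).IsSymmetric)
    (hu : u ∈ normalConeAt (vectorRange T ⊤) p) {v : E} (hv : ‖v‖ = 1) :
    (vectorState T v - p) ⬝ᵥ u = 0 ↔ v ∈ LinearMap.ker (pencil (centered T p) u) := by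
  rw [← vectorState_centered hv, vectorState_dotProduct, LinearMap.mem_ker]
  refine ⟨fun h => inner_self_eq_zero (𝕜 := ℂ).1 ?_,
    fun h => by rw [h, inner_zero_right, Complex.zero_re]⟩
  exact inner_eq_zero_of_re_inner_nonneg (isSymmetric_pencil (isSymmetric_centered hT) u)
    (fun _ => re_inner_pencil_nonneg hu) Submodule.mem_top h Submodule.mem_top

theorem supportFace_vectorRange (hT : ∀ i, (T i).IsSymmetric)
    (hu : u ∈ normalConeAt (vectorRange T ⊤) p) :
    supportFace (vectorRange T ⊤) p u =
      vectorRange T (LinearMap.ker (pencil (centered T p) u)) := by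
  ext y
  constructor
  · rintro ⟨⟨v, ⟨-, hv⟩, rfl⟩, h⟩
    exact ⟨v, ⟨(vectorState_sub_dotProduct_eq_zero_iff hT hu hv).1 h, hv⟩, rfl⟩
  · rintro ⟨v, ⟨hker, hv⟩, rfl⟩
    exact ⟨⟨v, ⟨Submodule.mem_top, hv⟩, rfl⟩,
      (vectorState_sub_dotProduct_eq_zero_iff hT hu hv).2 hker⟩

theorem inner_centered_eq_zero_of_span_eq_top (hT : ∀ i, (T i).IsSymmetric)
    (hspan : Submodule.span ℝ (normalConeAt (vectorRange T V) p) = ⊤) {x : E} (hx : x ∈ V)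
    (hx1 : ‖x‖ = 1) (hxp : vectorState T x = p) {v : E} (hv : v ∈ V) (i : Fin d) :
    inner ℂ v (centered T p i x) = 0 := by
  let φ : (Fin d → ℝ) →ₗ[ℝ] ℂ :=
    Fintype.linearCombination ℝ fun j => inner ℂ v (centered T p j x)
  have hφ : Submodule.span ℝ (normalConeAt (vectorRange T V) p) ≤ LinearMap.ker φ := by
    refine Submodule.span_le.2 fun u hu => (inner_pencil x v).symm.trans ?_
    refine inner_eq_zero_of_re_inner_nonneg (isSymmetric_pencil (isSymmetric_centered hT) u)
      (fun _ => re_inner_pencil_nonneg hu) hx ?_ hv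
    rw [← vectorState_dotProduct, vectorState_centered hx1, hxp, sub_self, zero_dotProduct]
  have hsingle : φ (Pi.single i 1) = 0 := hφ (hspan ▸ Submodule.mem_top)
  rwa [Fintype.linearCombination_apply_single, one_smul] at hsingle

theorem three_le_finrank_of_span_eq_top [FiniteDimensional ℂ E] (hT : ∀ i, (T i).IsSymmetric)
    (hspan : Submodule.span ℝ (normalConeAt (vectorRange T V) p) = ⊤) (hp : p ∈ vectorRange T V)
    (hd : 2 ≤ convDim (vectorRange T V)) : 3 ≤ Module.finrank ℂ V := by
  by_contra! hV
  obtain ⟨x, ⟨hx, hx1⟩, hxp⟩ := hp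
  obtain ⟨w, hw, hle⟩ := exists_le_span_pair_of_finrank_le_two (Nat.le_of_lt_succ hV) hx
    (norm_ne_zero_iff.1 (hx1 ▸ one_ne_zero))
  have horth {y : E} (hy : y ∈ V) (a : ℂ) (i : Fin d) :
      inner ℂ y (centered T p i (a • x)) = 0 := by
    rw [map_smul, inner_smul_right, inner_centered_eq_zero_of_span_eq_top hT hspan hx hx1 hxp hy,
      mul_zero]
  have hline : ∀ y ∈ vectorRange T V,
      y - p ∈ Submodule.span ℝ {vectorState (centered T p) w} := by
    rintro _ ⟨v, ⟨hv, hv1⟩, rfl⟩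
    obtain ⟨a, c, rfl⟩ := Submodule.mem_span_pair.1 (hle hv)
    rw [← vectorState_centered hv1, vectorState_add_of_inner_eq_zero (isSymmetric_centered hT)
      (horth (V.smul_mem a hx) a) (horth (V.smul_mem c hw) a), vectorState_smul]
    exact Submodule.smul_mem _ _ (Submodule.mem_span_singleton_self _)
  have hline_le_one := finrank_span_le_card (R := ℝ) {vectorState (centered T p) w}
  rw [Set.toFinset_singleton, Finset.card_singleton] at hline_le_one
  have := convDim_le_finrank hline
  omega

theorem mem_vectorRange_of_mem_extremePoints
    (hp : p ∈ (jointRange T ⊤).extremePoints ℝ)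
    (hpV : p ∈ jointRange T V) : p ∈ vectorRange T V := by
  have hsub : jointRange T V ⊆ jointRange T ⊤ :=
    convexHull_mono (vectorRange_mono le_top)
  exact extremePoints_convexHull_subset
    (inter_extremePoints_subset_extremePoints_of_subset hsub ⟨hpV, hp⟩)

theorem normalConeAt_vectorRange_orthogonal_subset [FiniteDimensional ℂ E]
    (hT : ∀ i, (T i).IsSymmetric) {K : Submodule ℂ E} (hK : ∀ x ∈ K, ∀ i, centered T p i x = 0) :
    normalConeAt (vectorRange T Kᗮ) p ⊆ normalConeAt (vectorRange T ⊤) p := by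
  rintro u hu _ ⟨v, ⟨-, hv⟩, rfl⟩
  obtain ⟨k, hk, w, hw, rfl⟩ := K.exists_add_mem_mem_orthogonal v
  change 0 ≤ (vectorState T (k + w) - p) ⬝ᵥ u
  rw [← vectorState_centered hv, vectorState_add_of_inner_eq_zero (isSymmetric_centered hT)
    (fun i => by rw [hK k hk, inner_zero_right]) (fun i => by rw [hK k hk, inner_zero_right]),
    vectorState_dotProduct]
  exact re_inner_pencil_nonneg hu hw

theorem isCompact_vectorRange [FiniteDimensional ℂ E] : IsCompact (vectorRange T V) := by
  have hT (i : Fin d) : Continuous (T i) := (T i).continuous_of_finiteDimensional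
  have hunit : IsCompact {v : E | v ∈ V ∧ ‖v‖ = 1} := by
    have := FiniteDimensional.proper ℂ E
    convert (isCompact_sphere (0 : E) 1).inter_left V.closed_of_finiteDimensional using 1
    ext v
    simp
  refine hunit.image (continuous_pi fun i => ?_)
  exact Complex.continuous_re.comp (continuous_id.inner (hT i))

theorem span_normalConeAt_eq_top_of_centered_eq_zero [FiniteDimensional ℂ E]
    (hT : ∀ i, (T i).IsSymmetric) (hp : p ∈ (jointRange T ⊤).extremePoints ℝ)
    (hker : ∀ x, ‖x‖ = 1 → vectorState T x = p → ∀ i, centered T p i x = 0) :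
    Submodule.span ℝ (normalConeAt (vectorRange T ⊤) p) = ⊤ := by
  let K : Submodule ℂ E := ⨅ i, LinearMap.ker (centered T p i)
  have hK : ∀ x ∈ K, ∀ i, centered T p i x = 0 := fun x hx => (Submodule.mem_iInf _).1 hx
  have hpK : p ∉ jointRange T Kᗮ := fun hpK => by
    obtain ⟨x, ⟨hx, hx1⟩, hxp⟩ := mem_vectorRange_of_mem_extremePoints hp hpK
    have hxK : x ∈ K := (Submodule.mem_iInf _).2 (hker x hx1 hxp)
    rw [inner_self_eq_zero.1 (K.inner_right_of_mem_orthogonal hxK hx), norm_zero] at hx1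
    exact zero_ne_one hx1
  have hcone := span_normalConeAt_eq_top_of_notMem_convexHull isCompact_vectorRange hpK
  exact top_le_iff.1
    (hcone.ge.trans (Submodule.span_mono (normalConeAt_vectorRange_orthogonal_subset hT hK)))

theorem supportFace_jointRange (hT : ∀ i, (T i).IsSymmetric)
    (hu : u ∈ normalConeAt (jointRange T ⊤) p) :
    supportFace (jointRange T ⊤) p u =
      jointRange T (LinearMap.ker (pencil (centered T p) u)) := by
  rw [normalConeAt_convexHull] at hu
  rw [supportFace_convexHull hu, supportFace_vectorRange hT hu]

theorem three_le_finrank_ker_pencil [FiniteDimensional ℂ E] (hT : ∀ i, (T i).IsSymmetric)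
    (hp : p ∈ (jointRange T ⊤).extremePoints ℝ) (hu : u ∈ normalConeAt (jointRange T ⊤) p)
    (hd : 2 ≤ convDim (supportFace (jointRange T ⊤) p u))
    (hspan : Submodule.span ℝ (normalConeAt (supportFace (jointRange T ⊤) p u) p) = ⊤) :
    3 ≤ Module.finrank ℂ (LinearMap.ker (pencil (centered T p) u)) := by
  have hpF : p ∈ supportFace (jointRange T ⊤) p u := mem_supportFace_self hp.1
  rw [supportFace_jointRange hT hu] at hd hspan hpF
  rw [convDim_convexHull] at hd
  rw [normalConeAt_convexHull] at hspan
  exact three_le_finrank_of_span_eq_top hT hspan (mem_vectorRange_of_mem_extremePoints hp hpF) hd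

theorem inner_centered_eq_zero_of_mem_ker_pencil (hT : ∀ i, (T i).IsSymmetric)
    (hu : u ∈ normalConeAt (jointRange T ⊤) p)
    (hspan : Submodule.span ℝ (normalConeAt (supportFace (jointRange T ⊤) p u) p) = ⊤)
    {x : E} (hx1 : ‖x‖ = 1) (hxp : vectorState T x = p) {v : E}
    (hv : v ∈ LinearMap.ker (pencil (centered T p) u)) (i : Fin d) :
    inner ℂ v (centered T p i x) = 0 := by
  rw [supportFace_jointRange hT hu, normalConeAt_convexHull] at hspan
  rw [normalConeAt_convexHull] at hu
  refine inner_centered_eq_zero_of_span_eq_top hT hspan ?_ hx1 hxp hv i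
  rw [← vectorState_sub_dotProduct_eq_zero_iff hT hu hx1, hxp, sub_self, zero_dotProduct]

theorem span_normalConeAt_eq_top_of_two_supportFaces [FiniteDimensional ℂ E]
    (hT : ∀ i, (T i).IsSymmetric) (hE : Module.finrank ℂ E ≤ 4)
    (hp : p ∈ (jointRange T ⊤).extremePoints ℝ)
    (hu₁ : u₁ ∈ normalConeAt (jointRange T ⊤) p)
    (hu₂ : u₂ ∈ normalConeAt (jointRange T ⊤) p)
    (hne : supportFace (jointRange T ⊤) p u₁ ≠
      supportFace (jointRange T ⊤) p u₂)
    (hd₁ : 2 ≤ convDim (supportFace (jointRange T ⊤) p u₁))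
    (hd₂ : 2 ≤ convDim (supportFace (jointRange T ⊤) p u₂))
    (hspan₁ : Submodule.span ℝ (normalConeAt (supportFace (jointRange T ⊤) p u₁) p) = ⊤)
    (hspan₂ : Submodule.span ℝ (normalConeAt (supportFace (jointRange T ⊤) p u₂) p) = ⊤) :
    Submodule.span ℝ (normalConeAt (jointRange T ⊤) p) = ⊤ := by
  have hrank₁ := three_le_finrank_ker_pencil hT hp hu₁ hd₁ hspan₁
  have hrank₂ := three_le_finrank_ker_pencil hT hp hu₂ hd₂ hspan₂
  have hker : LinearMap.ker (pencil (centered T p) u₁) ≠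
      LinearMap.ker (pencil (centered T p) u₂) := fun h => hne <| by
    rw [supportFace_jointRange hT hu₁, supportFace_jointRange hT hu₂, h]
  have hsup := sup_eq_top_of_finrank_le_add_one hker (by omega) (by omega)
  rw [normalConeAt_convexHull]
  refine span_normalConeAt_eq_top_of_centered_eq_zero hT hp fun x hx1 hxp i => ?_
  obtain ⟨v₁, hv₁, v₂, hv₂, hsum⟩ := Submodule.mem_sup.1
    (hsup ▸ Submodule.mem_top : centered T p i x ∈ _)
  refine inner_self_eq_zero (𝕜 := ℂ).1 ?_
  nth_rw 1 [← hsum]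
  rw [inner_add_left, inner_centered_eq_zero_of_mem_ker_pencil hT hu₁ hspan₁ hx1 hxp hv₁,
    inner_centered_eq_zero_of_mem_ker_pencil hT hu₂ hspan₂ hx1 hxp hv₂, add_zero]

end VectorStates

section JointNumericalRange

variable {n : Type*} [Fintype n] {k : ℕ}

theorem isLinearMap_wpt (A : Fin k → Matrix n n ℂ) : IsLinearMap ℝ (wpt A) where
  map_add ρ σ := by
    ext i
    simp only [wpt, Matrix.add_mul, Matrix.trace_add, Complex.add_re, Pi.add_apply]
  map_smul a ρ := by
    ext i
    simp only [wpt, Matrix.smul_mul, Matrix.trace_smul, Complex.smul_re, Pi.smul_apply]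

theorem convex_JNR (A : Fin k → Matrix n n ℂ) : Convex ℝ (JNR A) := by
  refine Convex.is_linear_image ?_ (isLinearMap_wpt A)
  rintro ρ ⟨hρ, hρ1⟩ σ ⟨hσ, hσ1⟩ a b ha hb hab
  refine ⟨(hρ.smul ha).add (hσ.smul hb), ?_⟩
  rw [Matrix.trace_add, Matrix.trace_smul, Matrix.trace_smul, hρ1, hσ1, ← add_smul, hab, one_smul]

theorem isDensity_vecMulVec_star {v : EuclideanSpace ℂ n} (hv : ‖v‖ = 1) :
    IsDensity (vecMulVec v (star v.ofLp)) := by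
  refine ⟨Matrix.posSemidef_vecMulVec_self_star _, ?_⟩
  rw [Matrix.trace_vecMulVec, ← EuclideanSpace.inner_eq_star_dotProduct,
    inner_self_eq_norm_sq_to_K, hv, RCLike.ofReal_one, one_pow]

variable [DecidableEq n]

theorem wpt_vecMulVec_star (A : Fin k → Matrix n n ℂ) (v : EuclideanSpace ℂ n) :
    wpt A (vecMulVec v (star v.ofLp)) = vectorState (fun i => (A i).toEuclideanLin) v := by
  ext i
  rw [wpt, vectorState, EuclideanSpace.inner_eq_star_dotProduct, Matrix.vecMulVec_mul,
    Matrix.trace_vecMulVec, Matrix.toLpLin_apply, dotProduct_comm, ← Matrix.dotProduct_mulVec,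
    dotProduct_comm]

theorem eq_sum_eigenvalues_smul_vecMulVec {ρ : Matrix n n ℂ} (hρ : ρ.IsHermitian) :
    ρ = ∑ j, hρ.eigenvalues j •
      vecMulVec (hρ.eigenvectorBasis j) (star (hρ.eigenvectorBasis j).ofLp) := by
  conv_lhs => rw [hρ.spectral_theorem]
  ext i l
  rw [Unitary.conjStarAlgAut_apply, Matrix.mul_apply, Matrix.sum_apply]
  refine Finset.sum_congr rfl fun j _ => ?_
  rw [Matrix.mul_diagonal]
  simp only [IsHermitian.eigenvectorUnitary_apply, Complex.coe_algebraMap, Function.comp_apply,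
    star_apply, RCLike.star_def, Matrix.smul_apply, vecMulVec_apply, Pi.star_apply,
    Complex.real_smul]
  ring

theorem JNR_eq_jointRange (A : Fin k → Matrix n n ℂ) :
    JNR A = jointRange (fun i => (A i).toEuclideanLin) ⊤ := by
  refine Set.Subset.antisymm ?_ (convexHull_min ?_ (convex_JNR A))
  · rintro _ ⟨ρ, ⟨hρ, hρ1⟩, rfl⟩
    have hH := hρ.isHermitian
    have hsum : ∑ j, hH.eigenvalues j = 1 := Complex.ofReal_injective <| by
      rw [Complex.ofReal_sum, Complex.ofReal_one]
      exact hH.trace_eq_sum_eigenvalues.symm.trans hρ1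
    rw [eq_sum_eigenvalues_smul_vecMulVec hH, ← IsLinearMap.mk'_apply (isLinearMap_wpt A), map_sum]
    simp only [map_smul, IsLinearMap.mk'_apply, wpt_vecMulVec_star]
    refine (convex_convexHull ℝ _).sum_mem (fun j _ => hρ.eigenvalues_nonneg j) hsum fun j _ => ?_
    exact subset_convexHull ℝ _ ⟨_, ⟨Submodule.mem_top, hH.eigenvectorBasis.norm_eq_one j⟩, rfl⟩
  · rintro _ ⟨v, ⟨-, hv⟩, rfl⟩
    exact ⟨_, isDensity_vecMulVec_star hv, wpt_vecMulVec_star A v⟩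

end JointNumericalRange

theorem stmt8_general {n : Type*} [Fintype n] (hn : Fintype.card n ≤ 4)
    (A : Fin 3 → Matrix n n ℂ) (hA : ∀ i, (A i).IsHermitian) (hdim : convDim (JNR A) = 3)
    (G₁ G₂ G H₁ H₂ : Set (Fin 3 → ℝ))
    (hG₁ : IsFaceOf (JNR A) G₁) (hd₁ : convDim G₁ = 1) (hG₁G : G₁ ≠ G)
    (hG₂ : IsFaceOf (JNR A) G₂) (hd₂ : convDim G₂ = 1) (hG₂G : G₂ ≠ G)
    (hH₁ : IsFaceOf (JNR A) H₁) (hH₁d : convDim H₁ = 2)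
    (hH₂ : IsFaceOf (JNR A) H₂) (hH₂d : convDim H₂ = 2)
    (hHH : H₁ ≠ H₂) (hGH₁ : G₁ ⊆ H₁) (hGH₂ : G₂ ⊆ H₂)
    (hG : IsExposedFace (JNR A) G) (hGd : convDim G = 1)
    (hne : (G₁ ∩ G₂ ∩ G).Nonempty) :
    ∃ p, G₁ ∩ G₂ ∩ G = {p} ∧ IsCornerPoint (JNR A) p := by
  classical
  obtain ⟨p, ⟨hp₁, hp₂⟩, hpG⟩ := hne
  have hconv := convex_JNR A
  obtain ⟨u₁, hu₁, rfl⟩ := hH₁.exists_supportFace hconv (by omega) (hGH₁ hp₁)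
  obtain ⟨u₂, hu₂, rfl⟩ := hH₂.exists_supportFace hconv (by omega) (hGH₂ hp₂)
  obtain ⟨w, hw, rfl⟩ := hG.exists_supportFace hpG
  have hGface := isFaceOf_supportFace hconv hw
  have hsing := hG₁.inter_eq_singleton_of_convDim_eq_one hGface hd₁ hGd hG₁G hp₁ hpG
  have hext : p ∈ (JNR A).extremePoints ℝ := isExtreme_singleton.1 (hsing ▸ (hG₁.inter hGface).2)
  refine ⟨p, by rw [Set.inter_right_comm, hsing, Set.singleton_inter_of_mem hp₂], hext.1, ?_⟩
  rcases span_normalConeAt_eq_top_or_supportFace_eq_inter hu₁ hu₂ hw hdim hH₁d hH₂d hGd hHH with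
    hspan | hinter
  · exact hspan
  have hcorner₁ := span_normalConeAt_supportFace_eq_top hconv hu₁
    (ne_of_apply_ne convDim (by omega)) hH₁d hG₁ hd₁ hGH₁ hGface hGd
    (hinter.subset.trans Set.inter_subset_left) hG₁G hp₁ hpG
  have hcorner₂ := span_normalConeAt_supportFace_eq_top hconv hu₂
    (ne_of_apply_ne convDim (by omega)) hH₂d hG₂ hd₂ hGH₂ hGface hGd
    (hinter.subset.trans Set.inter_subset_right) hG₂G hp₂ hpG
  rw [JNR_eq_jointRange] at hext hu₁ hu₂ hHH hH₁d hH₂d hcorner₁ hcorner₂ ⊢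
  exact span_normalConeAt_eq_top_of_two_supportFaces
    (fun i => Matrix.isSymmetric_toEuclideanLin_iff.2 (hA i)) (finrank_euclideanSpace.trans_le hn)
    hext hu₁ hu₂ hHH hH₁d.ge hH₂d.ge hcorner₁ hcorner₂

/-- if two distinct one-dimensional nonexposed faces, included in
distinct non-elliptic faces, and a one-dimensional exposed face have a common
point, then that point is a corner point of `W`. -/
theorem stmt8 (A : Fin 3 → Matrix (Fin 4) (Fin 4) ℂ)
    (hA : ∀ i, (A i).IsHermitian)
    (hdim : convDim (JNR A) = 3)
    (G₁ G₂ G H₁ H₂ : Set (Fin 3 → ℝ))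
    (hG₁ : IsFaceOf (JNR A) G₁) (hd₁ : convDim G₁ = 1)
    (hG₁ne : ¬ IsExposedFace (JNR A) G₁)
    (hG₂ : IsFaceOf (JNR A) G₂) (hd₂ : convDim G₂ = 1)
    (hG₂ne : ¬ IsExposedFace (JNR A) G₂)
    (hGG : G₁ ≠ G₂)
    (hH₁ : IsNonEllipticFace (JNR A) H₁)
    (hH₂ : IsNonEllipticFace (JNR A) H₂)
    (hHH : H₁ ≠ H₂) (hGH₁ : G₁ ⊆ H₁) (hGH₂ : G₂ ⊆ H₂)
    (hG : IsExposedFace (JNR A) G) (hGd : convDim G = 1)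
    (hne : (G₁ ∩ G₂ ∩ G).Nonempty) :
    ∃ p, G₁ ∩ G₂ ∩ G = {p} ∧ IsCornerPoint (JNR A) p := by
  exact stmt8_general (Fintype.card_fin 4).le A hA hdim G₁ G₂ G H₁ H₂ hG₁ hd₁
    (fun h => hG₁ne (h ▸ hG)) hG₂ hd₂ (fun h => hG₂ne (h ▸ hG)) hH₁.1 hH₁.2.1 hH₂.1 hH₂.2.1 hHH
    hGH₁ hGH₂ hG hGd hne
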